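/- If R is right noetherian and left FP-injective, then R is quasi-Frobenius if and only if every nonzero complement left ideal of R is not small. -/

import Mathlib

open MulOpposite in
/-- Right ideals of `R`, as submodules of `R` over `Rᵐᵒᵖ`. -/
abbrev RIdeal (R : Type*) [Ring R] := Submodule Rᵐᵒᵖ R

section Defs
variable (R : Type*) [Ring R]

/-- Left annihilator of a subset. -/
def lAnn (X : Set R) : Set R := {a | ∀ x ∈ X, a * x = 0}

/-- Right annihilator of a subset. -/
def rAnn (X : Set R) : Set R := {a | ∀ x ∈ X, x * a = 0}

/-- Right annihilator of a subset, as a right ideal. -/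
def rAnnI (X : Set R) : RIdeal R where
  carrier := rAnn R X
  add_mem' := by intro a b ha hb x hx; rw [mul_add, ha x hx, hb x hx, add_zero]
  zero_mem' := by intro x hx; rw [mul_zero]
  smul_mem' := by
    intro c a ha x hx
    show x * (a * c.unop) = 0
    rw [← mul_assoc, ha x hx, zero_mul]

/-- `R` is left P-injective: `rl(a) = aR` for every `a`. -/
def IsLeftPInjective : Prop :=
  ∀ a x : R, (∀ u : R, u * a = 0 → u * x = 0) ↔ ∃ s : R, x = a * s

/-- `R` is left 2-injective. -/
def IsLeft2Injective : Prop :=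
  ∀ (a b : R) (f : ↥(Submodule.span R ({a, b} : Set R)) →ₗ[R] R),
    ∃ g : R →ₗ[R] R, ∀ x : ↥(Submodule.span R ({a, b} : Set R)), g (x : R) = f x

/-- `R` is left FP-injective: every matrix ring over `R` is left P-injective. -/
def IsLeftFPInjective : Prop :=
  ∀ n : ℕ, IsLeftPInjective (Matrix (Fin n) (Fin n) R)

/-- A left ideal is small if `K + I = R` implies `K = R`. -/
def IsSmallLeftIdeal (I : Ideal R) : Prop := ∀ K : Ideal R, K ⊔ I = ⊤ → K = ⊤

/-- A complement left ideal: maximal with respect to intersecting some left ideal trivially. -/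
def IsComplementLeftIdeal (C : Ideal R) : Prop :=
  ∃ S : Ideal R, C ⊓ S = ⊥ ∧ ∀ C' : Ideal R, C ≤ C' → C' ⊓ S = ⊥ → C' = C

/-- A right ideal is essential in `R`. -/
def IsEssentialRIdeal (I : RIdeal R) : Prop := ∀ K : RIdeal R, K ⊓ I = ⊥ → K = ⊥

/-- The right socle: the sum of all simple (minimal) right ideals. -/
def rSocle : RIdeal R := sSup {m : RIdeal R | IsSimpleModule Rᵐᵒᵖ m}

/-- The right singular ideal. -/
def rSingular : Set R := {a | IsEssentialRIdeal R (rAnnI R {a})}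

/-- ACC on right annihilators. -/
def ACCOnRightAnnihilators : Prop :=
  ∀ f : ℕ → Set R, (∀ n, ∃ X : Set R, f n = rAnn R X) → (∀ n, f n ⊆ f (n + 1)) →
    ∃ n, ∀ m, n ≤ m → f m = f n

/-- The Jacobson radical, as a set. -/
def jacobsonSet : Set R := (TwoSidedIdeal.jacobson (⊥ : TwoSidedIdeal R) : Set R)

/-- A subset is nilpotent if products of some fixed length of its elements vanish. -/
def IsNilpotentSet (J : Set R) : Prop :=
  ∃ n : ℕ, ∀ f : Fin (n + 1) → R, (∀ i, f i ∈ J) → (List.ofFn f).prod = 0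

/-- `R` is quasi-Frobenius: left noetherian and left self-injective. -/
def IsQuasiFrobenius : Prop := IsNoetherianRing R ∧ Module.Injective R R

/-- `R` is right mininjective. -/
def IsRightMininjective : Prop :=
  ∀ (I : RIdeal R), IsSimpleModule Rᵐᵒᵖ I → ∀ f : I →ₗ[Rᵐᵒᵖ] R,
    ∃ c : R, ∀ x : I, f x = c * (x : R)

/-- `R` is left mininjective. -/
def IsLeftMininjective : Prop :=
  ∀ (I : Ideal R), IsSimpleModule R I → ∀ f : I →ₗ[R] R,
    ∃ c : R, ∀ x : I, f x = (x : R) * c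

/-- `R` is right simple injective. -/
def IsRightSimpleInjective : Prop :=
  ∀ (I : RIdeal R) (f : I →ₗ[Rᵐᵒᵖ] R), IsSimpleModule Rᵐᵒᵖ (LinearMap.range f) →
    ∃ c : R, ∀ x : I, f x = c * (x : R)

/-- `R` is left CS: every left ideal is essential in a direct summand of `R`. -/
def IsLeftCS : Prop :=
  ∀ I : Ideal R, ∃ K : Ideal R, (∃ K' : Ideal R, IsCompl K K') ∧ I ≤ K ∧
    ∀ L : Ideal R, L ≤ K → L ⊓ I = ⊥ → L = ⊥

/-- `R` is left min-CS: every minimal left ideal is essential in a direct summand. -/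
def IsLeftMinCS : Prop :=
  ∀ I : Ideal R, IsSimpleModule R I → ∃ K : Ideal R, (∃ K' : Ideal R, IsCompl K K') ∧ I ≤ K ∧
    ∀ L : Ideal R, L ≤ K → L ⊓ I = ⊥ → L = ⊥

/-- `R` is right Johns: right noetherian and every right ideal is a right annihilator. -/
def IsRightJohns : Prop :=
  IsNoetherianRing Rᵐᵒᵖ ∧ ∀ I : RIdeal R, ∃ X : Set R, (I : Set R) = rAnn R X

end Defs

section MoreDefs
variable (R : Type*) [Ring R]

/-- Left annihilator of a subset, as a left ideal. -/
def lAnnI (X : Set R) : Ideal R where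
  carrier := lAnn R X
  add_mem' := by intro a b ha hb x hx; rw [add_mul, ha x hx, hb x hx, add_zero]
  zero_mem' := by intro x hx; rw [zero_mul]
  smul_mem' := by
    intro c a ha x hx
    show c * a * x = 0
    rw [mul_assoc, ha x hx, mul_zero]

/-- A left ideal is essential in `R`. -/
def IsEssentialLIdeal (I : Ideal R) : Prop := ∀ K : Ideal R, K ⊓ I = ⊥ → K = ⊥

/-- The left singular ideal `Z_l`. -/
def lSingular : Set R := {a | IsEssentialLIdeal R (lAnnI R {a})}

end MoreDefs

/-!
Write `J` for the Jacobson radical, `l` and `r` for left and right annihilators. If `R` is left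
self-injective, complement left ideals are generated by idempotents, and a nonzero idempotent
generates a left ideal that is not contained in `J`, i.e. not small.

For the converse, every finitely generated right ideal `T` of a left FP-injective ring satisfies
`r(l(T)) = T`, and `J` is the left singular ideal. A maximal right ideal is therefore `r(x)` for
some `x`, and `R x` is uniform; a complement left ideal containing `R x` essentially is uniform and
not small, hence generated by an idempotent which spans a minimal right ideal modulo `J`. So `R ⧸ J`
is semisimple. The ascending chain `l(Jⁿ)` stabilises, so by double annihilators and Nakayama's
lemma `J` is nilpotent, and the right noetherian ring `R` is right artinian.

Put `S = r(J)`. Essentiality arguments give `S J = 0` and `r(S) = J`, which make the monotone map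
`K ↦ l(S ∩ l(K))` strictly monotone on the two-sided ideals above `J`. It sends `J` to an ideal
above `J`, so noetherianity forces it to fix `J`, that is, `l(S) = J`. This implies that `R` is left
Kasch. For a left FP-injective left Kasch ring `L ↦ r(L)` is strictly antitone on finitely generated
left ideals, so the descending chain condition on right ideals makes `R` left noetherian, and then
FP-injectivity and Baer's criterion give left self-injectivity.
-/

section FPInjective

variable {R : Type*} [Ring R]

theorem RIdeal.mul_mem_right (T : RIdeal R) {x : R} (hx : x ∈ T) (s : R) : x * s ∈ T :=
  T.smul_mem (MulOpposite.op s) hx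

theorem mem_lAnnI {X : Set R} {a : R} : a ∈ lAnnI R X ↔ ∀ x ∈ X, a * x = 0 := Iff.rfl

theorem IsLeftPInjective.of_ringEquiv {A : Type*} [Ring A] (e : R ≃+* A)
    (h : IsLeftPInjective R) : IsLeftPInjective A := by
  refine fun a x ↦ ⟨fun hax ↦ ?_, fun ⟨s, hs⟩ u hu ↦ by rw [hs, ← mul_assoc, hu, zero_mul]⟩
  obtain ⟨s, hs⟩ := (h (e.symm a) (e.symm x)).1 fun u hu ↦ by
    simpa using congrArg e.symm (hax (e u) (by simpa using congrArg e hu))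
  exact ⟨e s, by simpa using congrArg e hs⟩

namespace IsLeftFPInjective

theorem isLeftPInjective_matrix (hFP : IsLeftFPInjective R) (ι : Type*) [Fintype ι]
    [DecidableEq ι] : IsLeftPInjective (Matrix ι ι R) :=
  (hFP (Fintype.card ι)).of_ringEquiv (Matrix.reindexRingEquiv R (Fintype.equivFin ι).symm)

theorem isLeftPInjective (hFP : IsLeftFPInjective R) : IsLeftPInjective R :=
  (hFP.isLeftPInjective_matrix Unit).of_ringEquiv Matrix.uniqueRingEquiv

open Matrix in
theorem exists_mulVec_eq (hFP : IsLeftFPInjective R) {m n : Type*} [Fintype m] [Fintype n]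
    (A : Matrix m n R) (b : m → R) (h : ∀ u : m → R, u ᵥ* A = 0 → u ⬝ᵥ b = 0) :
    ∃ s : n → R, A *ᵥ s = b := by
  classical
  rcases isEmpty_or_nonempty m with _ | ⟨⟨k⟩⟩
  · exact ⟨0, Subsingleton.elim _ _⟩
  -- Padding `A` and `b` by zeros to square matrices turns the system into a principal one.
  obtain ⟨S, hS⟩ := (hFP.isLeftPInjective_matrix (m ⊕ n) (fromBlocks 0 A 0 0)
    (fromBlocks (of fun i _ ↦ b i) 0 0 0)).1 fun U hU ↦ by
      rw [← fromBlocks_toBlocks U, fromBlocks_multiply, ← fromBlocks_zero, fromBlocks_inj] at hU ⊢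
      simp only [mul_zero, add_zero, Matrix.mul_zero, true_and, and_true] at hU ⊢
      refine ⟨?_, ?_⟩ <;> ext i _
      · exact h (U.toBlocks₁₁ i) (funext fun l ↦ congrFun (congrFun hU.1 i) l)
      · exact h (U.toBlocks₂₁ i) (funext fun l ↦ congrFun (congrFun hU.2 i) l)
  refine ⟨fun j ↦ S (.inr j) (.inl k), funext fun i ↦ ?_⟩
  have hik := congrFun (congrFun hS (.inl i)) (.inl k)
  simpa [Matrix.mul_apply, mulVec, dotProduct] using hik.symm

theorem exists_mul_right_eq (hFP : IsLeftFPInjective R) {m : Type*} [Fintype m] (a b : m → R)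
    (h : ∀ u : m → R, ∑ i, u i * a i = 0 → ∑ i, u i * b i = 0) : ∃ c, ∀ i, a i * c = b i := by
  obtain ⟨s, hs⟩ := hFP.exists_mulVec_eq (Matrix.replicateCol Unit a) b
    fun u hu ↦ h u (congrFun hu ())
  exact ⟨s (), fun i ↦ by simpa [Matrix.mulVec, dotProduct] using congrFun hs i⟩

theorem exists_mul_eq_self_and_mul_eq_zero (hFP : IsLeftFPInjective R) {y z : R}
    (h : Disjoint (Ideal.span {y}) (Ideal.span {z})) : ∃ c, y * c = y ∧ z * c = 0 := by
  obtain ⟨c, hc⟩ := hFP.exists_mul_right_eq ![y, z] ![y, 0] fun u hu ↦ by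
    simp only [Fin.sum_univ_two, Matrix.cons_val_zero, Matrix.cons_val_one, mul_zero,
      add_zero] at hu ⊢
    refine Submodule.disjoint_def.1 h _ (Ideal.mul_mem_left _ _ (Ideal.mem_span_singleton_self y))
      ?_
    rw [eq_neg_of_add_eq_zero_left hu, ← neg_mul]
    exact Ideal.mul_mem_left _ _ (Ideal.mem_span_singleton_self z)
  exact ⟨c, hc 0, hc 1⟩

theorem mem_of_fg (hFP : IsLeftFPInjective R) {T : RIdeal R} (hT : T.FG) {x : R}
    (h : ∀ u ∈ lAnnI R (T : Set R), u * x = 0) : x ∈ T := by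
  obtain ⟨n, t, ht⟩ := Submodule.fg_iff_exists_fin_generating_family.1 hT
  obtain ⟨s, hs⟩ := hFP.exists_mulVec_eq (Matrix.replicateRow Unit t) (fun _ ↦ x) fun u hu ↦ by
    suffices T ≤ rAnnI R {u ()} by
      simpa [dotProduct] using h (u ()) fun y hy ↦ this hy (u ()) rfl
    rw [← ht, Submodule.span_le]
    rintro _ ⟨i, rfl⟩ _ rfl
    simpa [Matrix.vecMul, dotProduct] using congrFun hu i
  rw [← congrFun hs ()]
  change ∑ i, t i * s i ∈ T
  exact T.sum_mem fun i _ ↦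
    T.mul_mem_right (ht ▸ Submodule.subset_span (Set.mem_range_self i)) _

end IsLeftFPInjective

end FPInjective

section JacobsonRadical

variable {R : Type*} [Ring R]

theorem isUnit_one_add_mul_comm {a b : R} : IsUnit (1 + a * b) ↔ IsUnit (1 + b * a) := by
  have h := not_congr (spectrum.unit_mem_mul_comm (R := ℤ) (a := -a) (b := b) (r := 1))
  simpa [spectrum.mem_iff] using h

theorem mem_jacobson_iff_forall_isUnit {x : R} :
    x ∈ Ring.jacobson R ↔ ∀ r, IsUnit (1 + r * x) := by
  rw [← Ideal.jacobson_bot, Ideal.mem_jacobson_iff]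
  constructor
  · intro hx
    have exists_left_inv : ∀ r, ∃ z, z * (1 + r * x) = 1 := fun r ↦ (hx r).imp fun z hz ↦ by
      rw [← sub_eq_zero, ← (Submodule.mem_bot R).1 hz]
      noncomm_ring
    intro r
    obtain ⟨z, hz⟩ := exists_left_inv r
    obtain ⟨w, hw⟩ := exists_left_inv (-(z * r))
    have hzw : 1 + -(z * r) * x = z := by
      rw [← hz]
      noncomm_ring
    rw [hzw] at hw
    exact ⟨⟨1 + r * x, z, left_inv_eq_right_inv hw hz ▸ hw, hz⟩, rfl⟩
  · intro hx y
    obtain ⟨z, hz⟩ := (hx y).exists_left_inv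
    refine ⟨z, ?_⟩
    rw [Submodule.mem_bot, ← sub_eq_zero.2 hz]
    noncomm_ring

theorem op_mem_jacobson_iff {x : R} :
    MulOpposite.op x ∈ Ring.jacobson Rᵐᵒᵖ ↔ x ∈ Ring.jacobson R := by
  simp only [mem_jacobson_iff_forall_isUnit, MulOpposite.op_surjective.forall,
    ← MulOpposite.op_mul, ← MulOpposite.op_one, ← MulOpposite.op_add, isUnit_op,
    isUnit_one_add_mul_comm (a := x)]

theorem isUnit_one_sub_of_mem_jacobson {x : R} (hx : x ∈ Ring.jacobson R) : IsUnit (1 - x) := by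
  simpa [sub_eq_add_neg] using mem_jacobson_iff_forall_isUnit.1 hx (-1)

theorem eq_zero_of_isIdempotentElem_of_mem_jacobson {e : R} (he : IsIdempotentElem e)
    (h : e ∈ Ring.jacobson R) : e = 0 :=
  (isUnit_one_sub_of_mem_jacobson h).mul_left_eq_zero.1 he.mul_one_sub_self

theorem isSmallLeftIdeal_iff_le_jacobson {C : Ideal R} :
    IsSmallLeftIdeal R C ↔ C ≤ Ring.jacobson R := by
  constructor
  · rw [Ring.jacobson_eq_sInf_isMaximal]
    exact fun hC ↦ le_sInf fun M (hM : M.IsMaximal) ↦ by_contra fun hCM ↦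
      hM.ne_top (hC M (hM.1.2 _ (left_lt_sup.2 hCM)))
  · intro hC K hK
    obtain ⟨k, hk, c, hc, hkc⟩ := Submodule.mem_sup.1 (hK ▸ Submodule.mem_top : (1 : R) ∈ K ⊔ C)
    rw [← eq_sub_iff_add_eq] at hkc
    exact K.eq_top_of_isUnit_mem hk (hkc ▸ isUnit_one_sub_of_mem_jacobson (hC hc))

theorem isEssentialLIdeal_iff {I : Ideal R} :
    IsEssentialLIdeal R I ↔ ∀ b ≠ 0, ∃ u, u * b ∈ I ∧ u * b ≠ 0 := by
  constructor
  · intro hI b hb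
    have := mt (hI (Ideal.span {b})) (by simpa using hb)
    obtain ⟨x, ⟨hx, hxI⟩, hx0⟩ := Submodule.exists_mem_ne_zero_of_ne_bot this
    obtain ⟨u, rfl⟩ := Ideal.mem_span_singleton'.1 hx
    exact ⟨u, hxI, hx0⟩
  · refine fun hI K hK ↦ (Submodule.eq_bot_iff K).2 fun b hb ↦ by_contra fun hb0 ↦ ?_
    obtain ⟨u, hu, hu0⟩ := hI b hb0
    exact hu0 ((Submodule.mem_bot R).1 (hK ▸ ⟨K.mul_mem_left u hb, hu⟩))

namespace IsLeftPInjective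

theorem exists_eq_mul (hP : IsLeftPInjective R) {a x : R} (h : ∀ u, u * a = 0 → u * x = 0) :
    ∃ s, x = a * s :=
  (hP a x).1 h

theorem lSingular_eq_jacobson (hP : IsLeftPInjective R) :
    lSingular R = (Ring.jacobson R : Set R) := by
  ext a
  change IsEssentialLIdeal R (lAnnI R {a}) ↔ a ∈ Ring.jacobson R
  simp only [isEssentialLIdeal_iff, mem_lAnnI, Set.mem_singleton_iff, forall_eq]
  constructor
  · rw [← op_mem_jacobson_iff, ← Ideal.jacobson_bot, Ideal.mem_jacobson_iff]
    intro ha y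
    obtain ⟨s, hs⟩ := hP.exists_eq_mul (a := 1 + a * y.unop) (x := 1) fun u hu ↦ by
      by_contra hu0
      rw [mul_one] at hu0
      obtain ⟨v, hv, hv0⟩ := ha u hu0
      refine hv0 ?_
      calc v * u = v * (u * (1 + a * y.unop)) - v * u * a * y.unop := by noncomm_ring
        _ = 0 := by rw [hu, hv, mul_zero, zero_mul, sub_zero]
    refine ⟨MulOpposite.op s, (Submodule.mem_bot _).2 (MulOpposite.unop_injective ?_)⟩
    have hs' : a * (y.unop * s) + s = 1 := by
      rw [hs]
      noncomm_ring
    simpa [sub_eq_zero] using hs'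
  · intro ha b hb
    by_contra! h
    obtain ⟨s, hs⟩ := hP.exists_eq_mul (a := b * a) (x := b) fun u hu ↦
      h u (by rw [mul_assoc, hu])
    refine hb ((isUnit_one_sub_of_mem_jacobson (Ideal.mul_mem_right s _ ha)).mul_left_eq_zero.1 ?_)
    rw [mul_sub, mul_one, ← mul_assoc, ← hs, sub_self]

theorem exists_forall_mul_eq_zero_of_notMem_jacobson (hP : IsLeftPInjective R) {a : R}
    (ha : a ∉ Ring.jacobson R) : ∃ b ≠ 0, ∀ u, u * b * a = 0 → u * b = 0 := by
  rw [← SetLike.mem_coe, ← hP.lSingular_eq_jacobson] at ha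
  change ¬ IsEssentialLIdeal R (lAnnI R {a}) at ha
  simpa [isEssentialLIdeal_iff, mem_lAnnI] using ha

end IsLeftPInjective

end JacobsonRadical

section Complements

theorem exists_le_maximal_disjoint {α : Type*} [CompleteLattice α] [IsCompactlyGenerated α]
    {a b : α} (h : Disjoint a b) : ∃ c, a ≤ c ∧ Maximal (Disjoint · b) c :=
  zorn_le_nonempty₀ {c | Disjoint c b}
    (fun s hs hchain _ _ ↦ ⟨sSup s, hchain.directedOn.disjoint_sSup_left.2 fun _ hc ↦ hs hc,
      fun _ hc ↦ le_sSup hc⟩) a h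

variable {R : Type*} [Ring R]

theorem isComplementLeftIdeal_iff {C : Ideal R} :
    IsComplementLeftIdeal R C ↔ ∃ S : Ideal R, Maximal (Disjoint · S) C := by
  refine exists_congr fun S ↦ ?_
  rw [maximal_iff, disjoint_iff]
  exact and_congr_right fun _ ↦ ⟨fun h D hD hCD ↦ (h D hCD (disjoint_iff.1 hD)).symm,
    fun h D hCD hD ↦ (h (disjoint_iff.2 hD) hCD).symm⟩

theorem exists_mul_eq_self_and_mul_eq_zero_of_injective [Module.Injective R R] {C V : Ideal R}
    (h : Disjoint C V) : ∃ e, (∀ c ∈ C, c * e = c) ∧ ∀ v ∈ V, v * e = 0 := by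
  have hinj : Function.Injective (LinearMap.coprod C.subtype V.subtype) := by
    rw [← LinearMap.ker_eq_bot, LinearMap.ker_coprod_of_disjoint_range _ _ (by simpa using h)]
    simp
  obtain ⟨φ, hφ⟩ := Module.Injective.out _ hinj (LinearMap.coprod C.subtype (0 : V →ₗ[R] R))
  have hφ_mul : ∀ x, x * φ 1 = φ x := fun x ↦ by
    rw [← smul_eq_mul, ← map_smul, smul_eq_mul, mul_one]
  refine ⟨φ 1, fun c hc ↦ ?_, fun v hv ↦ ?_⟩
  · simpa [hφ_mul] using hφ (⟨c, hc⟩, 0)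
  · simpa [hφ_mul] using hφ (0, ⟨v, hv⟩)

theorem IsComplementLeftIdeal.exists_isIdempotentElem_eq_span [Module.Injective R R]
    {C : Ideal R} (hC : IsComplementLeftIdeal R C) :
    ∃ e, IsIdempotentElem e ∧ C = Ideal.span {e} := by
  obtain ⟨S, hdisj, hmax⟩ := isComplementLeftIdeal_iff.1 hC
  obtain ⟨V, -, hVC, hVmax⟩ := exists_le_maximal_disjoint hdisj.symm
  obtain ⟨e, hCe, hVe⟩ := exists_mul_eq_self_and_mul_eq_zero_of_injective hVC.symm
  have hCspan : C ≤ Ideal.span {e} := fun c hc ↦ Ideal.mem_span_singleton'.2 ⟨c, hCe c hc⟩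
  have hspan : Disjoint (Ideal.span {e}) S := by
    refine Submodule.disjoint_def.2 fun s hs hsS ↦ by_contra fun hs0 ↦ ?_
    obtain ⟨u, rfl⟩ := Ideal.mem_span_singleton'.1 hs
    have hndisj : ¬ Disjoint (V ⊔ Ideal.span {u}) C := fun h ↦ hs0 <| hVe u <|
      hVmax h le_sup_left <| Ideal.mem_sup_right <| Ideal.mem_span_singleton_self u
    refine hndisj (Submodule.disjoint_def.2 fun c hc hcC ↦ ?_)
    obtain ⟨v, hv, _, hw, rfl⟩ := Submodule.mem_sup.1 hc
    obtain ⟨w, rfl⟩ := Ideal.mem_span_singleton'.1 hw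
    refine Submodule.disjoint_def.1 hdisj _ hcC ?_
    rw [← hCe _ hcC, add_mul, hVe v hv, zero_add, mul_assoc]
    exact S.mul_mem_left w hsS
  have hC_eq : C = Ideal.span {e} := hCspan.antisymm (hmax hspan hCspan)
  exact ⟨e, hCe e (hC_eq ▸ Ideal.mem_span_singleton_self e), hC_eq⟩

theorem not_isSmallLeftIdeal_span_of_isIdempotentElem {e : R} (he : IsIdempotentElem e)
    (he0 : e ≠ 0) : ¬ IsSmallLeftIdeal R (Ideal.span {e}) := fun h ↦
  he0 <| eq_zero_of_isIdempotentElem_of_mem_jacobson he <|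
    isSmallLeftIdeal_iff_le_jacobson.1 h (Ideal.mem_span_singleton_self e)

end Complements

section Uniform

theorem exists_maximal_disjoint_essential {α : Type*} [CompleteLattice α] [IsModularLattice α]
    [IsCompactlyGenerated α] (a : α) :
    ∃ b c, a ≤ c ∧ Maximal (Disjoint · b) c ∧ ∀ d ≤ c, Disjoint d a → d = ⊥ := by
  obtain ⟨b, -, hb, hbmax⟩ := exists_le_maximal_disjoint (disjoint_bot_left : Disjoint ⊥ a)
  obtain ⟨c, hac, hc⟩ := exists_le_maximal_disjoint hb.symm
  refine ⟨b, c, hac, hc, fun d hdc hda ↦ ?_⟩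
  have hbd : Disjoint (b ⊔ d) a :=
    hda.disjoint_sup_left_of_disjoint_sup_right (hc.1.symm.mono_right (sup_le hdc hac))
  exact (hc.1.mono_left hdc).eq_bot_of_le (le_sup_right.trans (hbmax hbd le_sup_left))

variable {R : Type*} [Ring R]

/-- A left ideal is uniform if any two nonzero left ideals inside it meet nontrivially; the zero
ideal is allowed. -/
def IsUniformLeftIdeal (U : Ideal R) : Prop :=
  ∀ K ≤ U, ∀ L ≤ U, Disjoint K L → K = ⊥ ∨ L = ⊥

theorem IsUniformLeftIdeal.exists_isComplementLeftIdeal {U : Ideal R}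
    (hU : IsUniformLeftIdeal U) :
    ∃ C, U ≤ C ∧ IsComplementLeftIdeal R C ∧ IsUniformLeftIdeal C := by
  obtain ⟨S, C, hUC, hC, hess⟩ := exists_maximal_disjoint_essential U
  refine ⟨C, hUC, isComplementLeftIdeal_iff.2 ⟨S, hC⟩, fun K hK L hL hKL ↦ ?_⟩
  exact (hU (K ⊓ U) inf_le_right (L ⊓ U) inf_le_right
    (hKL.mono inf_le_left inf_le_left)).imp
    (fun h ↦ hess K hK (disjoint_iff.2 h)) (fun h ↦ hess L hL (disjoint_iff.2 h))

instance isNoetherian_mulOpposite_self [IsNoetherianRing Rᵐᵒᵖ] : IsNoetherian Rᵐᵒᵖ R :=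
  isNoetherian_of_linearEquiv (MulOpposite.opLinearEquiv Rᵐᵒᵖ).symm

theorem mul_mul_eq_self_of_eq_mul_self_mul [IsNoetherianRing Rᵐᵒᵖ] {w s : R}
    (h : w = w * w * s) : w * s * w = w := by
  let f : R →ₗ[Rᵐᵒᵖ] R := LinearMap.mulLeft Rᵐᵒᵖ w
  let F : LinearMap.range f →ₗ[Rᵐᵒᵖ] LinearMap.range f :=
    f.restrict fun x _ ↦ LinearMap.mem_range_self f x
  have hF : Function.Surjective F := by
    rintro ⟨_, x, rfl⟩
    refine ⟨⟨w * (s * x), s * x, rfl⟩, Subtype.ext ?_⟩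
    calc w * (w * (s * x)) = w * w * s * x := by simp only [mul_assoc]
      _ = w * x := by rw [← h]
  have hw : F ⟨w * (s * w), s * w, rfl⟩ = F ⟨w, 1, mul_one w⟩ := Subtype.ext <| by
    calc w * (w * (s * w)) = w * w * s * w := by simp only [mul_assoc]
      _ = w * w := by rw [← h]
  rw [mul_assoc]
  exact congrArg Subtype.val
    (IsNoetherian.injective_of_surjective_endomorphism F hF hw)

namespace IsUniformLeftIdeal

theorem eq_zero_of_mul_eq_zero {U : Ideal R} (hU : IsUniformLeftIdeal U) {d w : R} (hdU : d ∈ U)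
    (hd0 : d ≠ 0) (hdw : ∀ r, r * d * w = 0 → r * d = 0) {c : R} (hcU : c ∈ U)
    (hcw : c * w = 0) : c = 0 := by
  have hdisj : Disjoint (Ideal.span {d}) (Ideal.span {c}) := by
    refine Submodule.disjoint_def.2 fun x hxd hxc ↦ ?_
    obtain ⟨r, rfl⟩ := Ideal.mem_span_singleton'.1 hxd
    obtain ⟨t, ht⟩ := Ideal.mem_span_singleton'.1 hxc
    exact hdw r (by rw [← ht, mul_assoc, hcw, mul_zero])
  simpa [hd0] using hU _ ((Ideal.span_singleton_le_iff_mem U).2 hdU) _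
    ((Ideal.span_singleton_le_iff_mem U).2 hcU) hdisj

theorem exists_isIdempotentElem_eq_span [IsNoetherianRing Rᵐᵒᵖ] (hP : IsLeftPInjective R)
    {U : Ideal R} (hU : IsUniformLeftIdeal U) (hUJ : ¬ U ≤ Ring.jacobson R) :
    ∃ g, IsIdempotentElem g ∧ U = Ideal.span {g} := by
  obtain ⟨a, haU, haJ⟩ := SetLike.not_le_iff_exists.1 hUJ
  obtain ⟨b, hb0, hb⟩ := hP.exists_forall_mul_eq_zero_of_notMem_jacobson haJ
  obtain ⟨t, ht⟩ := hP.exists_eq_mul (a := b * a) (x := b) fun u hu ↦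
    hb u (by rw [mul_assoc, hu])
  have hwU : t * a ∈ U := U.mul_mem_left t haU
  have hba0 : b * a ≠ 0 := fun h ↦ hb0 (by rw [ht, h, zero_mul])
  have hbaw : b * a * (t * a) = b * a := by rw [← mul_assoc, ← ht]
  set w := t * a
  have hann : ∀ c ∈ U, c * w = 0 → c = 0 := fun c hc ↦
    hU.eq_zero_of_mul_eq_zero (U.mul_mem_left b haU) hba0
      (fun r hr ↦ by rwa [mul_assoc, hbaw] at hr) hc
  obtain ⟨s, hs⟩ := hP.exists_eq_mul (a := w * w) (x := w) fun u hu ↦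
    hann (u * w) (U.mul_mem_left u hwU) (by rw [mul_assoc, hu])
  have hwsw : w * s * w = w := mul_mul_eq_self_of_eq_mul_self_mul hs
  have hgw : w * (s * w) = w := by rw [← mul_assoc, hwsw]
  have hg : IsIdempotentElem (s * w) := by
    rw [IsIdempotentElem, mul_assoc, hgw]
  have hgU : s * w ∈ U := U.mul_mem_left s hwU
  have hg0 : s * w ≠ 0 := fun h ↦ hba0 (by rw [← hbaw, ← hgw, h, mul_zero, mul_zero])
  refine ⟨s * w, hg, le_antisymm (fun c hc ↦ ?_) ((Ideal.span_singleton_le_iff_mem U).2 hgU)⟩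
  refine Ideal.mem_span_singleton'.2 ⟨c, sub_eq_zero.1 ?_⟩
  refine hU.eq_zero_of_mul_eq_zero hgU hg0 (fun r hr ↦ by rwa [mul_assoc, hg.eq] at hr)
    (U.sub_mem (U.mul_mem_left c hgU) hc) ?_
  rw [sub_mul, mul_assoc, hg.eq, sub_self]

theorem exists_mul_mul_eq_self (hP : IsLeftPInjective R) {y a : R}
    (hU : IsUniformLeftIdeal (Ideal.span {y})) (ha : y * a ∉ Ring.jacobson R) :
    ∃ s, y * a * s = y := by
  obtain ⟨b, hb0, hb⟩ := hP.exists_forall_mul_eq_zero_of_notMem_jacobson ha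
  have hy_mem := Ideal.mem_span_singleton_self y
  obtain ⟨s, hs⟩ := hP.exists_eq_mul (a := y * a) (x := y) fun u hu ↦
    hU.eq_zero_of_mul_eq_zero (d := b * y) (w := a) (Ideal.mul_mem_left _ b hy_mem)
      (fun h ↦ hb0 (by simpa using hb 1 (by rw [one_mul, ← mul_assoc, h, zero_mul])))
      (fun r hr ↦ by
        rw [← mul_assoc, hb r (by simpa only [mul_assoc] using hr), zero_mul])
      (Ideal.mul_mem_left _ u hy_mem) (by rw [mul_assoc, hu])
  exact ⟨s, hs.symm⟩

end IsUniformLeftIdeal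

theorem RIdeal.ne_top_iff_one_notMem {T : RIdeal R} : T ≠ ⊤ ↔ (1 : R) ∉ T :=
  not_congr ⟨fun h ↦ h ▸ Submodule.mem_top, fun h ↦ eq_top_iff.2 fun x _ ↦ by
    simpa using T.mul_mem_right h x⟩

namespace IsLeftFPInjective

theorem isUniformLeftIdeal_span_singleton (hFP : IsLeftFPInjective R) {x : R}
    (hx : IsCoatom (rAnnI R {x})) : IsUniformLeftIdeal (Ideal.span {x}) := by
  intro K hK L hL hKL
  by_contra! h
  obtain ⟨y, hyK, hy0⟩ := K.exists_mem_ne_zero_of_ne_bot h.1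
  obtain ⟨z, hzL, hz0⟩ := L.exists_mem_ne_zero_of_ne_bot h.2
  obtain ⟨c, hyc, hzc⟩ := hFP.exists_mul_eq_self_and_mul_eq_zero <|
    hKL.mono ((K.span_singleton_le_iff_mem).2 hyK) ((L.span_singleton_le_iff_mem).2 hzL)
  have rAnnI_eq : ∀ v ∈ Ideal.span {x}, v ≠ 0 → rAnnI R {v} = rAnnI R {x} := by
    intro v hv hv0
    obtain ⟨r, rfl⟩ := Ideal.mem_span_singleton'.1 hv
    refine (hx.le_iff_eq (RIdeal.ne_top_iff_one_notMem.2 fun h1 ↦ hv0 ?_)).1 fun t ht ↦ ?_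
    · simpa using h1 _ rfl
    · rintro _ rfl
      rw [mul_assoc, ht x rfl, mul_zero]
  have hc : c ∈ rAnnI R {x} := rAnnI_eq z (hL hzL) hz0 ▸ by rintro _ rfl; exact hzc
  have hc' : 1 - c ∈ rAnnI R {x} := rAnnI_eq y (hK hyK) hy0 ▸ by
    rintro _ rfl; rw [mul_sub, mul_one, hyc, sub_self]
  exact RIdeal.ne_top_iff_one_notMem.1 hx.1 (by simpa using add_mem hc' hc)

variable [IsNoetherianRing Rᵐᵒᵖ]

theorem mem_of_forall_mem_lAnnI (hFP : IsLeftFPInjective R) {T : RIdeal R} {x : R}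
    (h : ∀ u ∈ lAnnI R (T : Set R), u * x = 0) : x ∈ T :=
  hFP.mem_of_fg (IsNoetherian.noetherian T) h

theorem exists_rAnnI_singleton_eq (hFP : IsLeftFPInjective R) {M : RIdeal R} (hM : IsCoatom M) :
    ∃ x, rAnnI R {x} = M := by
  have h1 := mt (hFP.mem_of_forall_mem_lAnnI (x := 1)) (RIdeal.ne_top_iff_one_notMem.1 hM.1)
  push Not at h1
  obtain ⟨x, hxM, hx⟩ := h1
  refine ⟨x, (hM.le_iff_eq (RIdeal.ne_top_iff_one_notMem.2 fun h ↦ hx ?_)).1 ?_⟩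
  · exact h x rfl
  · rintro m hm _ rfl
    exact hxM m hm

theorem exists_notMem_forall_mul_mul_eq_self (hFP : IsLeftFPInjective R)
    (hcompl : ∀ C : Ideal R, IsComplementLeftIdeal R C → C ≠ ⊥ → ¬ IsSmallLeftIdeal R C)
    {M : RIdeal R} (hM : IsCoatom M) :
    ∃ g ∉ M, ∀ a, g * a ∉ Ring.jacobson R → ∃ s, g * a * s = g := by
  obtain ⟨x, rfl⟩ := hFP.exists_rAnnI_singleton_eq hM
  obtain ⟨C, hxC, hC, hCu⟩ :=
    (hFP.isUniformLeftIdeal_span_singleton hM).exists_isComplementLeftIdeal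
  rw [Ideal.span_singleton_le_iff_mem] at hxC
  have hx0 : x ≠ 0 := by
    rintro rfl
    exact RIdeal.ne_top_iff_one_notMem.1 hM.1 (by rintro _ rfl; exact zero_mul 1)
  have hC0 : C ≠ ⊥ := fun h ↦ hx0 (by simpa [h] using hxC)
  obtain ⟨g, hg, rfl⟩ := hCu.exists_isIdempotentElem_eq_span hFP.isLeftPInjective
    (mt isSmallLeftIdeal_iff_le_jacobson.2 (hcompl C hC hC0))
  obtain ⟨r, rfl⟩ := Ideal.mem_span_singleton'.1 hxC
  refine ⟨g, fun hgM ↦ hx0 ?_, fun a ↦ hCu.exists_mul_mul_eq_self hFP.isLeftPInjective⟩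
  rw [← hgM _ rfl, mul_assoc, hg.eq]

end IsLeftFPInjective

end Uniform

section Semisimple

/-- Right ideals of `R` are the same as left ideals of the opposite ring. -/
def RIdeal.orderIsoOp {R : Type*} [Ring R] : Ideal Rᵐᵒᵖ ≃o RIdeal R :=
  (Submodule.orderIsoMapComap (MulOpposite.opLinearEquiv Rᵐᵒᵖ)).symm

theorem isSimpleModule_span_singleton {A : Type*} [Ring A] {g : A} (hg0 : g ≠ 0)
    (hg : ∀ a, a * g ≠ 0 → ∃ s, s * (a * g) = g) : IsSimpleModule A (Ideal.span {g}) := by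
  refine isSimpleModule_iff_isAtom.2 ⟨by simpa using hg0, fun I hI ↦ by_contra fun hI0 ↦ ?_⟩
  obtain ⟨x, hxI, hx0⟩ := I.exists_mem_ne_zero_of_ne_bot hI0
  obtain ⟨a, rfl⟩ := Ideal.mem_span_singleton'.1 (hI.le hxI)
  obtain ⟨s, hs⟩ := hg a hx0
  exact hI.not_ge ((Ideal.span_singleton_le_iff_mem I).2 (hs ▸ I.smul_mem s hxI))

theorem isSemisimpleRing_quotient_jacobson {A : Type*} [Ring A]
    (h : ∀ M : Ideal A, M.IsMaximal →
      ∃ g ∉ M, ∀ a, a * g ∉ Ring.jacobson A → ∃ s, s * (a * g) = g) :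
    IsSemisimpleRing (A ⧸ Ring.jacobson A) := by
  refine IsSemisimpleModule.of_sSup_simples_eq_top (by_contra fun hne ↦ ?_)
  obtain ⟨M, hM, hle⟩ := Ideal.exists_le_maximal _ hne
  have hM' := Ideal.comap_isMaximal_of_surjective
    (Ideal.Quotient.mk (Ring.jacobson A)) Ideal.Quotient.mk_surjective (K := M)
  obtain ⟨g, hgM, hg⟩ := h _ hM'
  have hsimple : IsSimpleModule (A ⧸ Ring.jacobson A)
      (Ideal.span {Ideal.Quotient.mk (Ring.jacobson A) g}) := by
    refine isSimpleModule_span_singleton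
      (fun hg0 ↦ hgM (Ideal.mem_comap.2 (hg0 ▸ M.zero_mem))) ?_
    refine (Ideal.Quotient.mk_surjective.forall).2 fun a ha ↦ ?_
    rw [← map_mul, ne_eq, Ideal.Quotient.eq_zero_iff_mem] at ha
    obtain ⟨s, hs⟩ := hg a ha
    exact ⟨Ideal.Quotient.mk _ s, by rw [← map_mul, ← map_mul, hs]⟩
  have hgspan : Ideal.span {Ideal.Quotient.mk (Ring.jacobson A) g} ≤ M :=
    le_trans (le_sSup (by exact hsimple)) hle
  exact hgM ((Ideal.span_singleton_le_iff_mem M).1 hgspan)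

theorem isSemisimpleRing_quotient_jacobson_of_mulOpposite {R : Type*} [Ring R]
    [IsSemisimpleRing (Rᵐᵒᵖ ⧸ Ring.jacobson Rᵐᵒᵖ)] :
    IsSemisimpleRing (R ⧸ Ring.jacobson R) := by
  rw [← isSemisimpleRing_mulOpposite_iff]
  let f : Rᵐᵒᵖ →+* (R ⧸ Ring.jacobson R)ᵐᵒᵖ := (Ideal.Quotient.mk (Ring.jacobson R)).op
  have hf : ∀ x ∈ Ring.jacobson Rᵐᵒᵖ, f x = 0 := fun x hx ↦
    MulOpposite.unop_injective (Ideal.Quotient.eq_zero_iff_mem.2 (op_mem_jacobson_iff.1 hx))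
  refine (Ideal.Quotient.lift _ f hf).isSemisimpleRing_of_surjective ?_
  refine Ideal.Quotient.lift_surjective_of_surjective _ hf ?_
  exact MulOpposite.op_surjective.forall.2 <| Ideal.Quotient.mk_surjective.forall.2 fun r ↦
    ⟨MulOpposite.op r, rfl⟩

theorem IsLeftFPInjective.isSemisimpleRing_mulOpposite_quotient_jacobson {R : Type*} [Ring R]
    [IsNoetherianRing Rᵐᵒᵖ] (hFP : IsLeftFPInjective R)
    (hcompl : ∀ C : Ideal R, IsComplementLeftIdeal R C → C ≠ ⊥ → ¬ IsSmallLeftIdeal R C) :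
    IsSemisimpleRing (Rᵐᵒᵖ ⧸ Ring.jacobson Rᵐᵒᵖ) := by
  refine isSemisimpleRing_quotient_jacobson fun M hM ↦ ?_
  obtain ⟨g, hgM, hg⟩ := hFP.exists_notMem_forall_mul_mul_eq_self hcompl
    ((RIdeal.orderIsoOp.isCoatom_iff M).2 hM.1)
  refine ⟨MulOpposite.op g, hgM, MulOpposite.op_surjective.forall.2 fun a ha ↦ ?_⟩
  rw [← MulOpposite.op_mul, op_mem_jacobson_iff] at ha
  obtain ⟨s, hs⟩ := hg a ha
  exact ⟨MulOpposite.op s, by rw [← MulOpposite.op_mul, ← MulOpposite.op_mul, hs]⟩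

end Semisimple

section Nilpotent

variable {R : Type*} [Ring R]

/-- The left annihilator of a subset closed under left multiplication, as a right ideal. -/
def lAnnRIdeal (X : Set R) (hX : ∀ r, ∀ x ∈ X, r * x ∈ X) : RIdeal R where
  carrier := lAnn R X
  add_mem' := (lAnnI R X).add_mem
  zero_mem' := (lAnnI R X).zero_mem
  smul_mem' c a ha x hx := (mul_assoc a c.unop x).trans (ha _ (hX _ x hx))

variable [IsNoetherianRing Rᵐᵒᵖ]

theorem IsLeftFPInjective.isNilpotent_jacobson_mulOpposite (hFP : IsLeftFPInjective R) :
    IsNilpotent (Ring.jacobson Rᵐᵒᵖ) := by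
  let T : ℕ → RIdeal R := fun n ↦ RIdeal.orderIsoOp (Ring.jacobson Rᵐᵒᵖ ^ n)
  let f : ℕ →o RIdeal R :=
    ⟨fun n ↦ lAnnRIdeal (T n) fun r x hx ↦ Ideal.mul_mem_right (MulOpposite.op r) _ hx,
      monotone_nat_of_le_succ fun n u hu x hx ↦ hu x (Ideal.pow_le_pow_right n.le_succ hx)⟩
  obtain ⟨n, hn⟩ := WellFoundedGT.monotone_chain_condition f
  have hT : T n ≤ T (n + 1) := fun x hx ↦ hFP.mem_of_forall_mem_lAnnI fun u hu ↦ by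
    have hun : u ∈ f n := hn (n + 1) n.le_succ ▸ hu
    exact hun x hx
  refine ⟨n, Submodule.FG.eq_bot_of_le_jacobson_smul (IsNoetherian.noetherian _) ?_⟩
  rw [smul_eq_mul, ← Ideal.IsTwoSided.pow_succ]
  exact RIdeal.orderIsoOp.le_iff_le.1 hT

theorem IsLeftFPInjective.isSemiprimaryRing_mulOpposite (hFP : IsLeftFPInjective R)
    (hcompl : ∀ C : Ideal R, IsComplementLeftIdeal R C → C ≠ ⊥ → ¬ IsSmallLeftIdeal R C) :
    IsSemiprimaryRing Rᵐᵒᵖ :=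
  ⟨hFP.isSemisimpleRing_mulOpposite_quotient_jacobson hcompl, hFP.isNilpotent_jacobson_mulOpposite⟩

theorem isArtinian_mulOpposite_self [IsSemiprimaryRing Rᵐᵒᵖ] : IsArtinian Rᵐᵒᵖ R :=
  IsSemiprimaryRing.isNoetherian_iff_isArtinian.1 isNoetherian_mulOpposite_self

end Nilpotent

section Kasch

theorem apply_eq_of_strictMonoOn_of_le_apply {α : Type*} [PartialOrder α] [WellFoundedGT α]
    {f : α → α} {s : Set α} (hs : Set.MapsTo f s s) (hf : StrictMonoOn f s) {a : α} (ha : a ∈ s)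
    (hle : a ≤ f a) : f a = a := by
  by_contra hne
  obtain ⟨b, ⟨hb, hlt⟩, hmax⟩ := wellFounded_gt.has_min {b | b ∈ s ∧ b < f b}
    ⟨a, ha, hle.lt_of_ne' hne⟩
  exact hmax (f b) ⟨hs hb, hf hb (hs hb) hlt⟩ hlt

theorem exists_mem_forall_sub_mul_mem_jacobson {A : Type*} [Ring A]
    [IsSemisimpleRing (A ⧸ Ring.jacobson A)] (E : Ideal A) :
    ∃ c ∈ E, ∀ x ∈ E, x - x * c ∈ Ring.jacobson A := by
  obtain ⟨e, he, hE⟩ := IsSemisimpleRing.ideal_eq_span_idempotent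
    (E.map (Ideal.Quotient.mk (Ring.jacobson A)))
  obtain ⟨c, hc, rfl⟩ := (Ideal.mem_map_iff_of_surjective _ Ideal.Quotient.mk_surjective).1
    (hE ▸ Ideal.mem_span_singleton_self e)
  refine ⟨c, hc, fun x hx ↦ ?_⟩
  obtain ⟨r, hr⟩ := Ideal.mem_span_singleton'.1 (hE ▸ Ideal.mem_map_of_mem _ hx)
  rw [← Ideal.Quotient.eq_zero_iff_mem, map_sub, map_mul, ← hr, mul_assoc, he.eq, sub_self]

variable {R : Type*} [Ring R]

theorem RIdeal.exists_mem_forall_sub_mul_mem_jacobson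
    [IsSemisimpleRing (Rᵐᵒᵖ ⧸ Ring.jacobson Rᵐᵒᵖ)] (K : RIdeal R) :
    ∃ c ∈ K, ∀ x ∈ K, x - c * x ∈ Ring.jacobson R := by
  obtain ⟨I, rfl⟩ := RIdeal.orderIsoOp.surjective K
  obtain ⟨c, hc, hcI⟩ := _root_.exists_mem_forall_sub_mul_mem_jacobson I
  exact ⟨c.unop, hc, fun x hx ↦ op_mem_jacobson_iff.1 (hcI (MulOpposite.op x) hx)⟩

theorem mem_of_isEssentialLIdeal_of_mem_rAnn_jacobson [IsSemisimpleRing (R ⧸ Ring.jacobson R)]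
    {E : Ideal R} (hE : IsEssentialLIdeal R E) {s : R} (hs : s ∈ rAnn R (Ring.jacobson R)) :
    s ∈ E := by
  obtain ⟨c, hc, hcE⟩ :=
    exists_mem_forall_sub_mul_mem_jacobson (Submodule.comap (LinearMap.toSpanSingleton R R s) E)
  suffices h : (1 - c) * s = 0 by
    rw [sub_mul, one_mul, sub_eq_zero] at h
    exact h ▸ hc
  by_contra h0
  obtain ⟨u, hu, hu0⟩ := isEssentialLIdeal_iff.1 hE _ h0
  rw [← mul_assoc] at hu hu0
  have hJ : u * (1 - c) ∈ Ring.jacobson R := by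
    have := add_mem (hcE (u * (1 - c)) hu) (Ideal.mul_mem_left _ u (hcE c hc))
    convert this using 1
    noncomm_ring
  exact hu0 (hs _ hJ)

theorem exists_mul_ne_zero_mul_mem_rAnn_jacobson (hJ : IsNilpotent (Ring.jacobson Rᵐᵒᵖ)) {b : R}
    (hb : b ≠ 0) : ∃ u, u * b ≠ 0 ∧ u * b ∈ rAnn R (Ring.jacobson R) := by
  obtain ⟨m, hm⟩ := hJ
  let P : ℕ → Prop := fun n ↦ ∀ x : R, MulOpposite.op x ∈ Ring.jacobson Rᵐᵒᵖ ^ n → x * b = 0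
  have hP_zero : ¬ P 0 := fun h ↦ hb (by simpa using h 1 (Submodule.one_le.1 le_rfl))
  have hP : P m := fun x hx ↦ by
    rw [hm] at hx
    rw [MulOpposite.op_injective hx, zero_mul]
  obtain ⟨n, hn, hn_succ⟩ := Nat.exists_not_and_succ_of_not_zero_of_exists hP_zero ⟨m, hP⟩
  dsimp only [P] at hn
  push Not at hn
  obtain ⟨u, hu, hub⟩ := hn
  refine ⟨u, hub, fun j hj ↦ ?_⟩
  rw [← mul_assoc]
  refine hn_succ _ ?_
  rw [MulOpposite.op_mul, Submodule.pow_succ]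
  exact Ideal.mul_mem_mul hu (op_mem_jacobson_iff.2 hj)

namespace IsLeftPInjective

theorem mul_eq_zero_of_mem_rAnn_jacobson [IsSemisimpleRing (R ⧸ Ring.jacobson R)]
    (hP : IsLeftPInjective R) {s j : R} (hs : s ∈ rAnn R (Ring.jacobson R))
    (hj : j ∈ Ring.jacobson R) : s * j = 0 := by
  rw [← SetLike.mem_coe, ← hP.lSingular_eq_jacobson] at hj
  exact mem_of_isEssentialLIdeal_of_mem_rAnn_jacobson hj hs j rfl

theorem mem_jacobson_of_forall_rAnn_mul_eq_zero (hP : IsLeftPInjective R)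
    (hJ : IsNilpotent (Ring.jacobson Rᵐᵒᵖ)) {c : R}
    (h : ∀ s ∈ rAnn R (Ring.jacobson R), s * c = 0) : c ∈ Ring.jacobson R := by
  by_contra hc
  obtain ⟨b, hb0, hb⟩ := hP.exists_forall_mul_eq_zero_of_notMem_jacobson hc
  obtain ⟨u, hu0, hu⟩ := exists_mul_ne_zero_mul_mem_rAnn_jacobson hJ hb0
  exact hu0 (hb u (h _ hu))

end IsLeftPInjective

theorem mul_mem_rAnn_jacobson {r s : R} (hs : s ∈ rAnn R (Ring.jacobson R)) :
    r * s ∈ rAnn R (Ring.jacobson R) := fun j hj ↦ by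
  rw [← mul_assoc, hs _ (Ideal.mul_mem_right r _ hj)]

/-- The left annihilator of `S ∩ l(K)`, where `S = r(J)` is the right annihilator of the Jacobson
radical `J` of `R`. A fixed point argument for this operator shows that `l(S) = J`. -/
def lAnnSocle (K : RIdeal R) : RIdeal R :=
  lAnnRIdeal (rAnn R (Ring.jacobson R) ∩ lAnn R K) fun r _ hx ↦
    ⟨mul_mem_rAnn_jacobson hx.1, (lAnnI R K).mul_mem_left r hx.2⟩

theorem lAnnSocle_mono : Monotone (lAnnSocle (R := R)) := fun _ _ hK _ ha x hx ↦
  ha x ⟨hx.1, fun k hk ↦ hx.2 k (hK hk)⟩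

/-- The two-sided ideals containing the Jacobson radical, as right ideals. -/
def twoSidedAboveJacobson (R : Type*) [Ring R] : Set (RIdeal R) :=
  {K | (Ring.jacobson R : Set R) ⊆ K ∧ ∀ r, ∀ k ∈ K, r * k ∈ K}

theorem mapsTo_lAnnSocle :
    Set.MapsTo lAnnSocle (twoSidedAboveJacobson R) (twoSidedAboveJacobson R) := fun _ _ ↦
  ⟨fun j hj _ hx ↦ hx.1 j hj, fun r a ha x hx ↦ by rw [mul_assoc, ha x hx, mul_zero]⟩

namespace IsLeftFPInjective

variable [IsNoetherianRing Rᵐᵒᵖ]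

theorem lAnn_inter_subset_of_lAnnSocle_le (hFP : IsLeftFPInjective R) {K K' : RIdeal R}
    (hK' : ∀ r, ∀ k ∈ K', r * k ∈ K') (h : lAnnSocle K' ≤ lAnnSocle K) :
    rAnn R (Ring.jacobson R) ∩ lAnn R K ⊆ lAnn R K' := fun x hx ↦ by
  have hx' : x ∈ rAnnI R (Ring.jacobson R) ⊓ lAnnRIdeal (K' : Set R) hK' :=
    hFP.mem_of_forall_mem_lAnnI fun u hu ↦ h hu x hx
  exact hx'.2

variable [IsSemiprimaryRing Rᵐᵒᵖ]

theorem le_of_lAnnSocle_le (hFP : IsLeftFPInjective R) {K K' : RIdeal R}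
    (hK : (Ring.jacobson R : Set R) ⊆ K) (hK' : ∀ r, ∀ k ∈ K', r * k ∈ K')
    (h : lAnnSocle K' ≤ lAnnSocle K) : K' ≤ K := by
  have := isSemisimpleRing_quotient_jacobson_of_mulOpposite (R := R)
  obtain ⟨c, hc, hcK⟩ := K.exists_mem_forall_sub_mul_mem_jacobson
  intro a ha
  have h_sub : (1 - c) * a ∈ Ring.jacobson R :=
    hFP.isLeftPInjective.mem_jacobson_of_forall_rAnn_mul_eq_zero
      IsSemiprimaryRing.isNilpotent fun s hs ↦ by
      have hsc : s * (1 - c) ∈ rAnn R (Ring.jacobson R) ∩ lAnn R K := by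
        refine ⟨(rAnnI R _).mul_mem_right hs _, fun k hk ↦ ?_⟩
        rw [mul_assoc, sub_mul, one_mul]
        exact hFP.isLeftPInjective.mul_eq_zero_of_mem_rAnn_jacobson hs (hcK k hk)
      rw [← mul_assoc]
      exact hFP.lAnn_inter_subset_of_lAnnSocle_le hK' h hsc a ha
  rw [sub_mul, one_mul] at h_sub
  exact (K.sub_mem_iff_left (K.mul_mem_right hc a)).1 (hK h_sub)

theorem strictMonoOn_lAnnSocle (hFP : IsLeftFPInjective R) :
    StrictMonoOn lAnnSocle (twoSidedAboveJacobson R) := fun _ hK _ hK' hlt ↦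
  (lAnnSocle_mono hlt.le).lt_of_not_ge fun h ↦ hlt.not_ge (hFP.le_of_lAnnSocle_le hK.1 hK'.2 h)

theorem mem_jacobson_of_forall_mul_rAnn_eq_zero (hFP : IsLeftFPInjective R) {c : R}
    (h : ∀ s ∈ rAnn R (Ring.jacobson R), c * s = 0) : c ∈ Ring.jacobson R := by
  let J : RIdeal R := RIdeal.orderIsoOp (Ring.jacobson Rᵐᵒᵖ)
  have mem_J {x : R} : x ∈ J ↔ x ∈ Ring.jacobson R := op_mem_jacobson_iff
  have hJ : J ∈ twoSidedAboveJacobson R :=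
    ⟨fun _ ↦ mem_J.2, fun r _ hx ↦ mem_J.2 (Ideal.mul_mem_left _ r (mem_J.1 hx))⟩
  rw [← mem_J, ← apply_eq_of_strictMonoOn_of_le_apply mapsTo_lAnnSocle
    hFP.strictMonoOn_lAnnSocle hJ fun j hj ↦ (mapsTo_lAnnSocle hJ).1 (mem_J.1 hj)]
  exact fun s hs ↦ h s hs.1

end IsLeftFPInjective

/-- A ring is left Kasch if every simple left module `R ⧸ N` embeds in `R`, that is, if every
maximal left ideal `N` annihilates some nonzero element from the left. -/
def IsLeftKasch (R : Type*) [Ring R] : Prop :=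
  ∀ N : Ideal R, N.IsMaximal → ∃ y ≠ 0, ∀ x ∈ N, x * y = 0

theorem IsLeftFPInjective.isLeftKasch [IsNoetherianRing Rᵐᵒᵖ] [IsSemiprimaryRing Rᵐᵒᵖ]
    (hFP : IsLeftFPInjective R) : IsLeftKasch R := by
  intro N hN
  have := isSemisimpleRing_quotient_jacobson_of_mulOpposite (R := R)
  obtain ⟨c, hc, hcN⟩ := exists_mem_forall_sub_mul_mem_jacobson N
  have h1c : 1 - c ∉ Ring.jacobson R := fun h ↦ hN.ne_top <| N.eq_top_iff_one.2 <|
    (N.sub_mem_iff_left hc).1 (Ring.jacobson_le_of_isMaximal N h)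
  have h_ann := mt hFP.mem_jacobson_of_forall_mul_rAnn_eq_zero h1c
  push Not at h_ann
  obtain ⟨s, hs, hs0⟩ := h_ann
  refine ⟨(1 - c) * s, hs0, fun x hx ↦ ?_⟩
  rw [← mul_assoc, mul_sub, mul_one]
  exact hs _ (hcN x hx)

end Kasch

section QuasiFrobenius

variable {R : Type*} [Ring R]

namespace IsLeftFPInjective

theorem exists_mem_rAnnI_mul_ne_zero (hFP : IsLeftFPInjective R) (hK : IsLeftKasch R)
    {L : Ideal R} (hL : L.FG) {x : R} (hx : x ∉ L) : ∃ t ∈ rAnnI R (L : Set R), x * t ≠ 0 := by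
  obtain ⟨n, a, rfl⟩ := Submodule.fg_iff_exists_fin_generating_family.1 hL
  set L := Submodule.span R (Set.range a)
  obtain ⟨N, hN, hLN⟩ := Ideal.exists_le_maximal
    (Submodule.comap (LinearMap.toSpanSingleton R R x) L) fun h ↦ hx <| by
      simpa using (Ideal.eq_top_iff_one _).1 h
  obtain ⟨y, hy0, hy⟩ := hK N hN
  obtain ⟨t, ht⟩ := hFP.exists_mul_right_eq (fun i ↦ Option.elim i x a)
    (fun i ↦ Option.elim i y 0) fun u hu ↦ by
      simp only [Fintype.sum_option, Option.elim_none, Option.elim_some, Pi.zero_apply, mul_zero,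
        Finset.sum_const_zero, add_zero] at hu ⊢
      refine hy _ (hLN ?_)
      change u none * x ∈ L
      rw [eq_neg_of_add_eq_zero_left hu]
      exact neg_mem (sum_mem fun i _ ↦
        L.smul_mem _ (Submodule.subset_span (Set.mem_range_self i)))
  have hLt : L ≤ lAnnI R {t} := Submodule.span_le.2 <| by
    rintro _ ⟨i, rfl⟩ _ rfl
    exact ht (some i)
  exact ⟨t, fun l hl ↦ hLt hl t rfl, (ht none).trans_ne hy0⟩

theorem isNoetherianRing_of_isLeftKasch [IsArtinian Rᵐᵒᵖ R] (hFP : IsLeftFPInjective R)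
    (hK : IsLeftKasch R) : IsNoetherianRing R := by
  refine isNoetherian_iff_fg_wellFounded.2 <| StrictAnti.wellFoundedGT
    (f := fun L : {L : Ideal R // L.FG} ↦ rAnnI R (L : Set R)) fun L L' hlt ↦ ?_
  have hle : rAnnI R (L' : Set R) ≤ rAnnI R (L : Set R) := fun t ht l hl ↦ ht l (hlt.le hl)
  refine hle.lt_of_not_ge fun hge ↦ ?_
  obtain ⟨x, hxL', hxL⟩ := SetLike.exists_of_lt (Subtype.coe_lt_coe.2 hlt)
  obtain ⟨t, ht, hxt⟩ := hFP.exists_mem_rAnnI_mul_ne_zero hK L.2 hxL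
  exact hxt (hge ht x hxL')

theorem injective_self [IsNoetherianRing R] (hFP : IsLeftFPInjective R) :
    Module.Injective R R := by
  refine Module.Baer.injective fun I g ↦ ?_
  obtain ⟨n, a, ha⟩ := Submodule.fg_iff_exists_fin_generating_family.1 (IsNoetherian.noetherian I)
  obtain ⟨a, rfl⟩ : ∃ b : Fin n → I, Subtype.val ∘ b = a :=
    ⟨fun i ↦ ⟨a i, ha ▸ Submodule.subset_span (Set.mem_range_self i)⟩, rfl⟩
  obtain ⟨c, hc⟩ := hFP.exists_mul_right_eq (fun i ↦ (a i : R)) (fun i ↦ g (a i)) fun u hu ↦ by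
    have hu' : ∑ i, u i • a i = 0 := Subtype.ext (by simpa using hu)
    simpa using congrArg g hu'
  have hspan : Submodule.span R (Set.range a) = ⊤ := by
    refine Submodule.map_injective_of_injective I.injective_subtype ?_
    rw [Submodule.map_span, ← Set.range_comp, Submodule.map_top, Submodule.range_subtype]
    exact ha
  have hg : g = LinearMap.toSpanSingleton R R c ∘ₗ I.subtype :=
    LinearMap.ext_on_range hspan fun i ↦ (hc i).symm
  exact ⟨LinearMap.toSpanSingleton R R c, fun x hx ↦ (LinearMap.congr_fun hg ⟨x, hx⟩).symm⟩

theorem isQuasiFrobenius [IsNoetherianRing Rᵐᵒᵖ] (hFP : IsLeftFPInjective R)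
    (hcompl : ∀ C : Ideal R, IsComplementLeftIdeal R C → C ≠ ⊥ → ¬ IsSmallLeftIdeal R C) :
    IsQuasiFrobenius R := by
  have := hFP.isSemiprimaryRing_mulOpposite hcompl
  have := isArtinian_mulOpposite_self (R := R)
  have := hFP.isNoetherianRing_of_isLeftKasch hFP.isLeftKasch
  exact ⟨this, hFP.injective_self⟩

end IsLeftFPInjective

end QuasiFrobenius

/-- For right noetherian left FP-injective rings, QF iff every nonzero complement
left ideal is not small. -/
theorem stmt8 (R : Type*) [Ring R] [IsNoetherianRing Rᵐᵒᵖ] (hFP : IsLeftFPInjective R) :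
    IsQuasiFrobenius R ↔
      ∀ C : Ideal R, IsComplementLeftIdeal R C → C ≠ ⊥ → ¬ IsSmallLeftIdeal R C := by
  refine ⟨fun ⟨_, _⟩ C hC hC0 ↦ ?_, hFP.isQuasiFrobenius⟩
  obtain ⟨e, he, rfl⟩ := hC.exists_isIdempotentElem_eq_span
  exact not_isSmallLeftIdeal_span_of_isIdempotentElem he (by simpa using hC0)
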